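/- arXiv:2209.11650 — 6 statements merged into one kernel-verified Lean document; each statement's English description precedes it below -/
import Mathlib

section
/- Let K be a field, n ≥ 6 an integer, and c_1,…,c_n ∈ K pairwise distinct. Set W_i = ∏_{j≠i}(c_i − c_j)^{−1}. Let k_0, k_1, r_0, r_1, s_0 ∈ K with k_1 ≠ 0 and s_0 ≠ 0, and let A'_i, B'_i, A''_i, B''_i ∈ K be all nonzero and satisfy, for every i: A'_i B'_i = (k_0 + k_1 c_i) W_i, A''_i B''_i = (r_0 + r_1 c_i) W_i, and A'_i B''_i + A''_i B'_i = s_0 W_i. Suppose e_1,…,e_n ∈ K satisfy: Σ_{i=1}^n e_i c_i^{k−1} A'_i B'_i = 0 for all k ∈ {1,…,n−3}; Σ_{i=1}^n e_i c_i^{k−1} A''_i B''_i = 0 for all k ∈ {1,…,n−5}; and Σ_{i=1}^n e_i c_i^{k−1}(A'_i B''_i + A''_i B'_i) = 0 for all k ∈ {1,…,n−4}. Then there exist q_0, q_1 ∈ K such that e_i = q_0 + q_1 c_i for every i ∈ {1,…,n}. (Consequently, the polynomial P_{n−3} = Σ_i e_i â_i b̂_i is a linear combination of P_{n−2} = Σ_i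 c_i â_i b̂_i and P_{n−1} = Σ_i â_i b̂_i, so Problem 2 has no solution with one parameter in dimension n > 4.) -/
/-!
Write `S m = ∑ i, e i * c i ^ m * W i`. Since `s₀ ≠ 0`, the third family of relations says
`S m = 0` for `m ≤ n - 5`; the first family says `k₀ * S m + k₁ * S (m + 1) = 0` for
`m ≤ n - 4`, so `k₁ ≠ 0` propagates the vanishing to `S (n - 4)` and `S (n - 3)`.

Let `E` be the Lagrange polynomial of degree `< n` with `E (c i) = e i`. For a polynomial `P` of
degree `< n`, `∑ i, P (c i) * W i` is the coefficient of `X ^ (n - 1)` in `P`. If `E` had degree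
`d ≥ 2`, then taking `P = E * X ^ (n - 1 - d)` would make the leading coefficient of `E` equal to
`S (n - 1 - d) = 0`. Hence `E` is affine.
-/

/-- If the weighted moments `∑ i, e i * c i ^ m * W i` vanish for `m + 3 ≤ n`, then `e` is an
affine function of the nodes: the moments are successively the top coefficients of the
interpolation polynomial. -/
theorem affine_of_moments_eq_zero {K : Type*} [Field K] {n : ℕ}
    {c : Fin n → K} (hc : Function.Injective c)
    {W : Fin n → K} (hW : ∀ i, W i = ∏ j ∈ Finset.univ.erase i, (c i - c j)⁻¹)
    (e : Fin n → K) (hS : ∀ m, m + 3 ≤ n → ∑ i, e i * c i ^ m * W i = 0) :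
    ∃ q0 q1 : K, ∀ i, e i = q0 + q1 * c i := by
  have hinj : Set.InjOn c (Finset.univ : Finset (Fin n)) := hc.injOn
  set E := Lagrange.interpolate Finset.univ c e
  have heval (i) : E.eval (c i) = e i :=
    Lagrange.eval_interpolate_at_node _ hinj (Finset.mem_univ i)
  have hdeg : E.degree < n := by
    simpa only [Finset.card_fin] using Lagrange.degree_interpolate_lt e hinj
  have hle : E.natDegree ≤ 1 := by
    by_contra! hd
    have hE0 : E ≠ 0 := by
      rintro h
      simp [h] at hd
    have hlt : E.natDegree < n := (Polynomial.natDegree_lt_iff_degree_lt hE0).2 hdeg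
    have hP : (E * Polynomial.X ^ (n - 1 - E.natDegree)).degree
        < ((Finset.univ : Finset (Fin n)).card : WithBot ℕ) := by
      rw [Polynomial.degree_mul, Polynomial.degree_X_pow,
        Polynomial.degree_eq_natDegree hE0, Finset.card_fin]
      norm_cast
      omega
    have key := Lagrange.coeff_eq_sum hinj hP
    have hidx : (Finset.univ : Finset (Fin n)).card - 1
        = E.natDegree + (n - 1 - E.natDegree) := by
      rw [Finset.card_fin]
      omega
    rw [hidx, Polynomial.coeff_mul_X_pow] at key
    apply hE0
    rw [← Polynomial.leadingCoeff_eq_zero, Polynomial.leadingCoeff, key,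
      ← hS (n - 1 - E.natDegree) (by omega)]
    refine Finset.sum_congr rfl fun i _ => ?_
    rw [Polynomial.eval_mul, heval, Polynomial.eval_pow, Polynomial.eval_X, hW i,
      Finset.prod_inv_distrib, div_eq_mul_inv]
  obtain ⟨a, b, hab⟩ := Polynomial.exists_eq_X_add_C_of_natDegree_le_one hle
  refine ⟨b, a, fun i => ?_⟩
  rw [← heval i, hab]
  simp [add_comm]


/-- algebraic core of Section 5.1: no one-parameter solution for `n > 4`.
`K` a field, `n ≥ 6`, `c₁,…,cₙ ∈ K` pairwise distinct, `Wᵢ = ∏_{j≠i}(cᵢ - cⱼ)⁻¹`.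
Given `k₀,k₁,r₀,r₁,s₀ ∈ K` with `k₁ ≠ 0`, `s₀ ≠ 0` and nonzero `A'ᵢ,B'ᵢ,A''ᵢ,B''ᵢ`
satisfying `A'ᵢB'ᵢ = (k₀+k₁cᵢ)Wᵢ`, `A''ᵢB''ᵢ = (r₀+r₁cᵢ)Wᵢ`,
`A'ᵢB''ᵢ + A''ᵢB'ᵢ = s₀Wᵢ`, and `e₁,…,eₙ` satisfying the three families of
Vandermonde-type relations, the `eᵢ` must be an affine function of the `cᵢ`. -/
theorem stmt3 (K : Type*) [Field K] (n : ℕ) (hn : 6 ≤ n)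
    (c : Fin n → K) (hc : Function.Injective c)
    (W : Fin n → K) (hW : ∀ i, W i = ∏ j ∈ Finset.univ.erase i, (c i - c j)⁻¹)
    (k0 k1 r0 r1 s0 : K) (hk1 : k1 ≠ 0) (hs0 : s0 ≠ 0)
    (A' B' A'' B'' : Fin n → K)
    (hA' : ∀ i, A' i ≠ 0) (hB' : ∀ i, B' i ≠ 0)
    (hA'' : ∀ i, A'' i ≠ 0) (hB'' : ∀ i, B'' i ≠ 0)
    (h1 : ∀ i, A' i * B' i = (k0 + k1 * c i) * W i)
    (h2 : ∀ i, A'' i * B'' i = (r0 + r1 * c i) * W i)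
    (h3 : ∀ i, A' i * B'' i + A'' i * B' i = s0 * W i)
    (e : Fin n → K)
    (he1 : ∀ k : ℕ, 1 ≤ k → k ≤ n - 3 →
      ∑ i, e i * c i ^ (k - 1) * (A' i * B' i) = 0)
    (he2 : ∀ k : ℕ, 1 ≤ k → k ≤ n - 5 →
      ∑ i, e i * c i ^ (k - 1) * (A'' i * B'' i) = 0)
    (he3 : ∀ k : ℕ, 1 ≤ k → k ≤ n - 4 →
      ∑ i, e i * c i ^ (k - 1) * (A' i * B'' i + A'' i * B' i) = 0) :
    ∃ q0 q1 : K, ∀ i, e i = q0 + q1 * c i := by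
  have low (m : ℕ) (hm : m + 5 ≤ n) : ∑ i, e i * c i ^ m * W i = 0 := by
    have h := he3 (m + 1) (by omega) (by omega)
    refine (mul_eq_zero.1 ?_).resolve_left hs0
    rw [← h, Finset.mul_sum]
    refine Finset.sum_congr rfl fun i _ => ?_
    rw [h3, Nat.add_sub_cancel]
    ring
  have step (m : ℕ) (hm : m + 4 ≤ n) (h0 : ∑ i, e i * c i ^ m * W i = 0) :
      ∑ i, e i * c i ^ (m + 1) * W i = 0 := by
    have h := he1 (m + 1) (by omega) (by omega)
    refine (mul_eq_zero.1 ?_).resolve_left hk1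
    calc k1 * ∑ i, e i * c i ^ (m + 1) * W i
        = k0 * (∑ i, e i * c i ^ m * W i) + k1 * ∑ i, e i * c i ^ (m + 1) * W i := by
          rw [h0]; ring
      _ = ∑ i, e i * c i ^ (m + 1 - 1) * (A' i * B' i) := by
          rw [Finset.mul_sum, Finset.mul_sum, ← Finset.sum_add_distrib]
          refine Finset.sum_congr rfl fun i _ => ?_
          rw [h1, Nat.add_sub_cancel]
          ring
      _ = 0 := h
  refine affine_of_moments_eq_zero hc hW e fun m hm => ?_
  induction m with
  | zero => exact low 0 (by omega)
  | succ m ih => exact step m (by omega) (ih (by omega))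
end

section
/- Let K be a field, n ≥ 1, and let a_{s,i} ∈ K^{n+1} for s ∈ {0,1}, i ∈ {1,…,n} satisfy Property 1: for every string s ∈ {0,1}^n and every k ∈ {1,…,n}, the n+1 vectors a_{s_1,1},…,a_{s_n,n}, a_{1−s_k,k} are linearly independent in K^{n+1}. Suppose s, r ∈ {0,1}^n with s ≠ r, and x_s, x_r ∈ K^{n+1} are vectors with last coordinate equal to 1 such that a_{s_i,i}·x_s = 0 and a_{r_i,i}·x_r = 0 for all i ∈ {1,…,n}. Then x_s ≠ x_r. -/
/-! If the two points coincide, choose a coordinate `k` with `s k ≠ r k`. The common vector `x` is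
annihilated by the `n` forms selected by `s` and also by `a (r k) k = a (!(s k)) k`. Property 1 says
these `n + 1` forms are independent, so they are the rows of an invertible square matrix and
`x = 0`, contradicting that its last coordinate is `1`. -/

/-- Lemma 4, `lemma_indep`, of the paper.  Let `K` be a field, `n ≥ 1`,
and `a s i ∈ K^(n+1)` (`s ∈ {0,1}`, `i ∈ {1,…,n}`) satisfy Property 1: for every string
`s ∈ {0,1}ⁿ` and every `k`, the `n+1` vectors `a (s 1) 1, …, a (s n) n, a (1-s k) k` are
linearly independent.  If `s ≠ r` and `x_s, x_r ∈ K^(n+1)` have last coordinate `1` and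
satisfy `a (s i) i · x_s = 0` and `a (r i) i · x_r = 0` for all `i`, then `x_s ≠ x_r`. -/
theorem stmt7 (K : Type*) [Field K] (n : ℕ) (hn : 1 ≤ n)
    (a : Bool → Fin n → Fin (n + 1) → K)
    (hProp1 : ∀ (s : Fin n → Bool) (k : Fin n),
      LinearIndependent K
        (Sum.elim (fun i => a (s i) i) (fun _ : Unit => a (!(s k)) k)))
    (s r : Fin n → Bool) (hsr : s ≠ r)
    (xs xr : Fin (n + 1) → K)
    (hxs1 : xs (Fin.last n) = 1) (hxr1 : xr (Fin.last n) = 1)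
    (hxs : ∀ i, ∑ j, a (s i) i j * xs j = 0)
    (hxr : ∀ i, ∑ j, a (r i) i j * xr j = 0) :
    xs ≠ xr := by
  rintro rfl
  obtain ⟨k, hk⟩ := Function.ne_iff.mp hsr
  have hrk : r k = !(s k) := by
    cases hs : s k <;> cases hr : r k <;> simp_all
  -- Reindexing the `n + 1` forms by `Fin (n + 1)` makes their coefficient matrix square.
  let e : Fin (n + 1) ≃ Fin n ⊕ Unit := Fintype.equivOfCardEq (by simp)
  let M : Matrix (Fin (n + 1)) (Fin (n + 1)) K := fun i =>
    Sum.elim (fun i => a (s i) i) (fun _ : Unit => a (!(s k)) k) (e i)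
  have hM : IsUnit M :=
    Matrix.linearIndependent_rows_iff_isUnit.mp ((hProp1 s k).comp e e.injective)
  have hMx : M.mulVec xs = 0 := by
    funext i
    change ∑ j, Sum.elim (fun i => a (s i) i) (fun _ : Unit => a (!(s k)) k) (e i) j * xs j = 0
    rcases e i with i' | u
    · exact hxs i'
    · have h := hxr k
      rw [hrk] at h
      exact h
  have hx : xs = 0 :=
    Matrix.mulVec_injective_iff_isUnit.mpr hM (by rw [hMx, Matrix.mulVec_zero])
  simp [hx] at hxs1
end

section
/- Let K be a field, n ≥ 1, and let a_{s,i} ∈ K^{n+1} for s ∈ {0,1}, i ∈ {1,…,n} satisfy Property 1: for every string s ∈ {0,1}^n and every k ∈ {1,…,n}, the n+1 vectors a_{s_1,1},…,a_{s_n,n}, a_{1−s_k,k} are linearly independent in K^{n+1}. Assume that for every s ∈ {0,1}^n there exists x_s ∈ K^{n+1} with last coordinate 1 such that a_{s_i,i}·x_s = 0 for all i. Then the set { x ∈ K^{n+1} : x has last coordinate 1 and (a_{0,i}·x)(a_{1,i}·x) = 0 for all i ∈ {1,…,n} } equals { x_s : s ∈ {0,1}^n } and has exactly 2^n elements; moreover,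 for each such x and each i, exactly one of a_{0,i}·x and a_{1,i}·x is zero. -/
/-!
Property 1 says that the `n` forms selected by a string `s`, together with any one of the
opposite forms, are a basis of the dual of `K^(n+1)`; hence only the zero vector is killed by all
of them (`eq_zero_of_selected_and_opposite`). A point with last coordinate `1` is nonzero, so both
forms of one pair never vanish there, which gives the exclusive alternative and the injectivity
of `s ↦ x s`. Conversely every point of the zero locus is killed by the forms selected by some `s`,
and two vectors with last coordinate `1` killed by the same selection coincide: the combination of
them that is also killed by one opposite form is zero.
-/

/-- A vector orthogonal to a linearly independent family of full size is zero. -/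
theorem eq_zero_of_forall_sum_mul_eq_zero {K ι κ : Type*} [Field K] [Fintype ι] [Fintype κ]
    (v : ι → κ → K) (hv : LinearIndependent K v) (hcard : Fintype.card ι = Fintype.card κ)
    (y : κ → K) (hy : ∀ i, ∑ j, v i j * y j = 0) : y = 0 := by
  classical
  have hspan : Submodule.span K (Set.range v) = ⊤ :=
    hv.span_eq_top_of_card_eq_finrank' (by simpa using hcard)
  have hall : ∀ w : κ → K, w ⬝ᵥ y = 0 := by
    intro w
    have hw : w ∈ Submodule.span K (Set.range v) := by
      rw [hspan]; exact Submodule.mem_top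
    induction hw using Submodule.span_induction with
    | mem w h => obtain ⟨i, rfl⟩ := h; exact hy i
    | zero => simp
    | add p q _ _ hp hq => rw [add_dotProduct, hp, hq, add_zero]
    | smul c p _ hp => rw [smul_dotProduct, hp, smul_zero]
  funext j
  simpa using hall (Pi.single j 1)

/-- Under Property 1, a vector killed by all the forms selected by `s` and by one opposite form
is zero. -/
theorem eq_zero_of_selected_and_opposite {K : Type*} [Field K] {n : ℕ}
    (a : Bool → Fin n → Fin (n + 1) → K)
    (hProp1 : ∀ (s : Fin n → Bool) (k : Fin n),
      LinearIndependent K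
        (Sum.elim (fun i => a (s i) i) (fun _ : Unit => a (!(s k)) k)))
    (s : Fin n → Bool) (k : Fin n) (y : Fin (n + 1) → K)
    (hs : ∀ i, ∑ j, a (s i) i j * y j = 0) (hk : ∑ j, a (!(s k)) k j * y j = 0) : y = 0 := by
  refine eq_zero_of_forall_sum_mul_eq_zero _ (hProp1 s k) (by simp) y ?_
  rintro (i | u)
  · exact hs i
  · exact hk

/-- point count for the diagonal model of the paper.  Let `K` be a
field, `n ≥ 1`, and `a s i ∈ K^(n+1)` satisfy Property 1.  Assume for every string
`s ∈ {0,1}ⁿ` there is `x s ∈ K^(n+1)` with last coordinate `1` and `a (s i) i · x s = 0`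
for all `i`.  Then the affine zero locus of the quadrics `G_i = â_{0,i} â_{1,i}` — i.e.
`{y : last coordinate 1, (a_{0,i}·y)(a_{1,i}·y) = 0 ∀ i}` — equals `{x s}`, has exactly
`2^n` elements, and at each such point exactly one of `a_{0,i}·y`, `a_{1,i}·y` vanishes. -/
theorem stmt9 (K : Type*) [Field K] (n : ℕ) (hn : 1 ≤ n)
    (a : Bool → Fin n → Fin (n + 1) → K)
    (hProp1 : ∀ (s : Fin n → Bool) (k : Fin n),
      LinearIndependent K
        (Sum.elim (fun i => a (s i) i) (fun _ : Unit => a (!(s k)) k)))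
    (x : (Fin n → Bool) → Fin (n + 1) → K)
    (hx1 : ∀ s, x s (Fin.last n) = 1)
    (hx0 : ∀ (s : Fin n → Bool) (i : Fin n), ∑ j, a (s i) i j * x s j = 0) :
    {y : Fin (n + 1) → K | y (Fin.last n) = 1 ∧
        ∀ i, (∑ j, a false i j * y j) * (∑ j, a true i j * y j) = 0} = Set.range x ∧
    Set.ncard {y : Fin (n + 1) → K | y (Fin.last n) = 1 ∧
        ∀ i, (∑ j, a false i j * y j) * (∑ j, a true i j * y j) = 0} = 2 ^ n ∧
    ∀ y ∈ {y : Fin (n + 1) → K | y (Fin.last n) = 1 ∧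
        ∀ i, (∑ j, a false i j * y j) * (∑ j, a true i j * y j) = 0},
      ∀ i, Xor' ((∑ j, a false i j * y j) = 0) ((∑ j, a true i j * y j) = 0) := by
  have key := eq_zero_of_selected_and_opposite a hProp1
  have opp : ∀ (s : Fin n → Bool) (y : Fin (n + 1) → K), y (Fin.last n) = 1 →
      (∀ i, ∑ j, a (s i) i j * y j = 0) → ∀ k, ∑ j, a (!(s k)) k j * y j ≠ 0 := by
    intro s y h1 hs k hk
    have h := key s k y hs hk
    rw [h] at h1
    exact zero_ne_one h1
  have uniq : ∀ (s : Fin n → Bool) (y : Fin (n + 1) → K), y (Fin.last n) = 1 →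
      (∀ i, ∑ j, a (s i) i j * y j = 0) → x s = y := by
    intro s y h1 hs
    -- an opposite form exists because `1 ≤ n`
    let k : Fin n := ⟨0, hn⟩
    have hlin : ∀ (c d : K) (w : Fin (n + 1) → K),
        ∑ j, w j * (c * y j - d * x s j) = c * ∑ j, w j * y j - d * ∑ j, w j * x s j := by
      intro c d w
      rw [Finset.mul_sum, Finset.mul_sum, ← Finset.sum_sub_distrib]
      exact Finset.sum_congr rfl fun j _ => by ring
    set c := ∑ j, a (!(s k)) k j * x s j with hc
    set d := ∑ j, a (!(s k)) k j * y j with hd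
    have hc0 : c ≠ 0 := opp s (x s) (hx1 s) (hx0 s) k
    have hz := key s k (fun j => c * y j - d * x s j)
      (fun i => by rw [hlin, hs, hx0]; ring) (by rw [hlin, ← hc, ← hd]; ring)
    -- the last coordinate of the vanishing combination gives `c = d`
    have hcd : c - d = 0 := by
      simpa [h1, hx1] using congrFun hz (Fin.last n)
    funext j
    have hj : c * y j - d * x s j = 0 := congrFun hz j
    apply mul_left_cancel₀ hc0
    linear_combination (x s j) * hcd - hj
  have sel : ∀ y : Fin (n + 1) → K,
      (∀ i, (∑ j, a false i j * y j) * (∑ j, a true i j * y j) = 0) →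
      ∃ s : Fin n → Bool, ∀ i, ∑ j, a (s i) i j * y j = 0 := by
    intro y hy
    have h : ∀ i, ∃ b : Bool, ∑ j, a b i j * y j = 0 := fun i =>
      (mul_eq_zero.mp (hy i)).elim (fun h => ⟨false, h⟩) (fun h => ⟨true, h⟩)
    choose s hs using h
    exact ⟨s, hs⟩
  have hset : {y : Fin (n + 1) → K | y (Fin.last n) = 1 ∧
      ∀ i, (∑ j, a false i j * y j) * (∑ j, a true i j * y j) = 0} = Set.range x := by
    ext y
    constructor
    · rintro ⟨h1, hy⟩
      obtain ⟨s, hs⟩ := sel y hy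
      exact ⟨s, uniq s y h1 hs⟩
    · rintro ⟨s, rfl⟩
      refine ⟨hx1 s, fun i => ?_⟩
      have h := hx0 s i
      cases hb : s i <;> rw [hb] at h <;> rw [h] <;> simp
  have hinj : Function.Injective x := by
    intro s t hst
    by_contra hne
    obtain ⟨k, hk⟩ := Function.ne_iff.mp hne
    have htk : t k = !(s k) := Bool.eq_not.mpr (Ne.symm hk)
    apply opp s (x s) (hx1 s) (hx0 s) k
    rw [← htk, hst]
    exact hx0 t k
  refine ⟨hset, ?_, ?_⟩
  · rw [hset, ← Set.image_univ, Set.ncard_image_of_injective _ hinj, Set.ncard_univ]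
    simp
  · rintro y ⟨h1, hy⟩ i
    obtain ⟨s, hs⟩ := sel y hy
    have h := hs i
    have h' := opp s y h1 hs i
    cases hb : s i <;> rw [hb] at h h'
    · exact Or.inl ⟨h, h'⟩
    · exact Or.inr ⟨h, h'⟩
end

section
/- Let K be a field, n ≥ 1, and let S ⊆ K^n be a finite set of points. Then the vanishing ideal I(S) = { f ∈ K[x_1,…,x_n] : f(p) = 0 for all p ∈ S } is generated by finitely many polynomials, each of which is a product of polynomials of total degree at most 1. -/
/-!
The ideal of a single point `p` is the maximal ideal generated by the linear polynomials
`X i - C (p i)` (`mem_pointIdeal`). The ideals of distinct points are comaximal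
(`isCoprime_pointIdeal`), because `X i - C (p i)` and `X i - C (q i)` differ by a nonzero constant
whenever `p i ≠ q i`. Hence the intersection of these ideals over `S`, which is the vanishing ideal
of `S`, equals their product, and that product is generated by the products
`∏ p ∈ S, (X (i p) - C (p (i p)))` of one linear generator per point.
-/

open MvPolynomial
open scoped Pointwise

/-- The linear polynomials `X i - C (p i)` that cut out the point `p`. -/
def pointGens {K : Type*} [Field K] {n : ℕ} (p : Fin n → K) : Set (MvPolynomial (Fin n) K) :=
  Set.range fun i => X i - C (p i)

/-- Modulo the ideal generated by `pointGens p`, every polynomial `f` is congruent to the constant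
`C (eval p f)`, since both sides are ring homomorphisms in `f` that agree on the variables. -/
lemma mem_pointIdeal {K : Type*} [Field K] {n : ℕ} (p : Fin n → K)
    (f : MvPolynomial (Fin n) K) : f ∈ Ideal.span (pointGens p) ↔ eval p f = 0 := by
  constructor
  · intro hf
    have hle : Ideal.span (pointGens p) ≤ RingHom.ker (eval p) := by
      rw [Ideal.span_le]
      rintro _ ⟨i, rfl⟩
      simp [RingHom.mem_ker]
    exact hle hf
  · intro hf
    have hmk : Ideal.Quotient.mk (Ideal.span (pointGens p)) =
        ((Ideal.Quotient.mk (Ideal.span (pointGens p))).comp C).comp (eval p) := by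
      refine MvPolynomial.ringHom_ext (fun a => by simp) fun i => ?_
      simp only [RingHom.comp_apply, eval_X]
      exact Ideal.Quotient.eq.2 (Ideal.subset_span ⟨i, rfl⟩)
    rw [← Ideal.Quotient.eq_zero_iff_mem, hmk]
    simp [hf]

lemma isCoprime_pointIdeal {K : Type*} [Field K] {n : ℕ} {p q : Fin n → K} (hpq : p ≠ q) :
    IsCoprime (Ideal.span (pointGens p)) (Ideal.span (pointGens q)) := by
  obtain ⟨i, hi⟩ := Function.ne_iff.1 hpq
  have hi' : q i - p i ≠ 0 := sub_ne_zero.2 hi.symm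
  -- Dividing `(X i - C (p i)) - (X i - C (q i)) = C (q i - p i)` by the constant gives `1`.
  refine Ideal.isCoprime_iff_exists.2
    ⟨C (q i - p i)⁻¹ * (X i - C (p i)), Ideal.mul_mem_left _ _ (Ideal.subset_span ⟨i, rfl⟩),
      C (-(q i - p i)⁻¹) * (X i - C (q i)), Ideal.mul_mem_left _ _ (Ideal.subset_span ⟨i, rfl⟩), ?_⟩
  calc _ = C ((q i - p i)⁻¹ * (q i - p i)) := by simp only [map_neg, map_mul, map_sub]; ring
    _ = 1 := by rw [inv_mul_cancel₀ hi', C_1]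

/-- Lemma of Section 3.2 of the paper.  Let `K` be a field, `n ≥ 1`,
and `S ⊆ Kⁿ` a finite set of points.  Then the vanishing ideal
`I(S) = {f ∈ K[x₁,…,xₙ] : f(p) = 0 ∀ p ∈ S}` is generated by finitely many polynomials,
each of which is a product of polynomials of total degree at most 1. -/
theorem stmt10 (K : Type*) [Field K] (n : ℕ) (S : Finset (Fin n → K)) :
    ∃ G : Finset (MvPolynomial (Fin n) K),
      (∀ g ∈ G, ∃ L : Multiset (MvPolynomial (Fin n) K),
        (∀ l ∈ L, l.totalDegree ≤ 1) ∧ g = L.prod) ∧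
      ∀ f : MvPolynomial (Fin n) K,
        f ∈ Ideal.span (G : Set (MvPolynomial (Fin n) K)) ↔
          ∀ p ∈ S, MvPolynomial.eval p f = 0 := by
  classical
  -- Elements of the pointwise product of sets choose one generator for each point of `S`.
  have hfin : (∏ p ∈ S, pointGens p).Finite := by
    have h : (∏ p ∈ S, pointGens p) =
        ((∏ p ∈ S, Finset.univ.image fun i => X i - C (p i) :
          Finset (MvPolynomial (Fin n) K)) : Set (MvPolynomial (Fin n) K)) := by
      rw [Finset.coe_prod]
      exact Finset.prod_congr rfl fun p _ => by simp [pointGens]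
    rw [h]
    exact Finset.finite_toSet _
  refine ⟨hfin.toFinset, fun g hg => ?_, fun f => ?_⟩
  · obtain ⟨l, hl, rfl⟩ := (Set.mem_finsetProd S _ g).1 (hfin.mem_toFinset.1 hg)
    refine ⟨S.val.map l, fun m hm => ?_, rfl⟩
    obtain ⟨p, hp, rfl⟩ := Multiset.mem_map.1 hm
    obtain ⟨i, hi⟩ := hl hp
    rw [← hi]
    exact (totalDegree_sub_C_le _ _).trans (totalDegree_X i).le
  · rw [hfin.coe_toFinset, ← Ideal.prod_span,
      Ideal.prod_eq_iInf_of_pairwise_isCoprime fun p _ q _ hpq => isCoprime_pointIdeal hpq]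
    simp only [Ideal.mem_iInf, mem_pointIdeal]
end

section
/- Let f, C_0 : ℝ → ℝ be functions with f(ξ) ≥ 1 and C_0(ξ) ≥ 1 for all ξ ≥ 0, C_0 nondecreasing on [0,∞), and both f and log∘C_0 concave on [0,∞). Fix a real p > 1 and define, for ξ ≥ 0, C(p,ξ) = C_0(ξ) / ( 2·[1 − (1 − p^{−f(ξ)})^{e^ξ}]·(1 − p^{−f(ξ)})^{e^ξ} ). Let ξ_0 > 0 satisfy e^{ξ_0} = −log 2 / log(1 − p^{−f(ξ_0)}). Then for every ξ ∈ [0, ξ_0]: C(p,ξ) ≥ min( p·C_0(0)/2 , C_0(ξ_0)/(2·log 2) ). In particular, if min_{ξ∈[0,ξ_0]} C(p,ξ) < p·C_0(0)/2, then min_{ξ∈[0,ξ_0]} C(p,ξ) ≥ C_0(ξ_0)/(2·log 2). -/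
/-!
Write `q = p^{-f(ξ)} ∈ (0,1)` and `n = e^ξ ≥ 1`. Bernoulli's inequality gives `1 - (1-q)^n ≤ n q`,
and `(1-q)^n ≤ 1`, so the cost is at least
`C₀(ξ) / (2 n q) = exp (log C₀(ξ) - ξ + f(ξ) log p) / 2` (`half_exp_le_cost`). The exponent is
concave in `ξ`, hence on `[0, ξ₀]` it is at least the smaller of its two endpoint values. At `0` the
bound is `C₀(0) p^{f(0)} / 2 ≥ p C₀(0) / 2`. At `ξ₀` the defining equation gives
`n q = q log 2 / (-log (1-q)) ≤ log 2`, so the bound is at least `C₀(ξ₀) / (2 log 2)`.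
-/

lemma rpow_neg_mem_Ioo {p y : ℝ} (hp : 1 < p) (hy : 1 ≤ y) : p ^ (-y) ∈ Set.Ioo (0 : ℝ) 1 :=
  ⟨Real.rpow_pos_of_pos (by linarith) _, Real.rpow_lt_one_of_one_lt_of_neg hp (by linarith)⟩

lemma exp_log_sub_add {p c x y : ℝ} (hp : 1 < p) (hc : 1 ≤ c) :
    Real.exp (Real.log c - x + y * Real.log p) = c / (Real.exp x * p ^ (-y)) := by
  have hp0 : 0 < p := by linarith
  rw [Real.exp_add, Real.exp_sub, Real.exp_log (by linarith), Real.rpow_def_of_pos hp0,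
    show Real.log p * -y = -(y * Real.log p) by ring, Real.exp_neg]
  field_simp

/-- The cost is bounded below by half the exponential of a function that is concave when `f` and
`log ∘ C₀` are; the bound comes from Bernoulli's inequality. -/
lemma half_exp_le_cost {p c x y : ℝ} (hp : 1 < p) (hc : 1 ≤ c) (hx : 0 ≤ x) (hy : 1 ≤ y) :
    Real.exp (Real.log c - x + y * Real.log p) / 2 ≤
      c / (2 * ((1 - (1 - p ^ (-y)) ^ Real.exp x) * (1 - p ^ (-y)) ^ Real.exp x)) := by
  rw [exp_log_sub_add hp hc]
  obtain ⟨hq0, hq1⟩ := rpow_neg_mem_Ioo hp hy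
  generalize p ^ (-y) = q at hq0 hq1 ⊢
  have hn : 1 ≤ Real.exp x := Real.one_le_exp hx
  have hB := one_add_mul_self_le_rpow_one_add (s := -q) (by linarith) hn
  rw [← sub_eq_add_neg 1 q] at hB
  have h0 : 0 < (1 - q) ^ Real.exp x := Real.rpow_pos_of_pos (by linarith) _
  have h1 : (1 - q) ^ Real.exp x < 1 :=
    Real.rpow_lt_one (by linarith) (by linarith) (by linarith)
  generalize (1 - q) ^ Real.exp x = t at hB h0 h1 ⊢
  rw [div_div]
  apply div_le_div_of_nonneg_left (by linarith)
  · have := mul_pos (sub_pos.2 h1) h0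
    linarith
  · nlinarith [mul_nonneg (sub_nonneg.2 h1.le) (sub_nonneg.2 h1.le)]

/-- the unnamed Lemma of Section 2.3 of the paper.  With `f, C₀ ≥ 1`
on `[0,∞)`, `C₀` nondecreasing on `[0,∞)`, `f` and `log ∘ C₀` concave on `[0,∞)`,
`p > 1`, the cost `C(p,ξ) = C₀(ξ)/(2·[1-(1-p^{-f(ξ)})^{e^ξ}]·(1-p^{-f(ξ)})^{e^ξ})`, and
`ξ₀ > 0` satisfying `e^{ξ₀} = -log 2/log(1-p^{-f(ξ₀)})`, every `ξ ∈ [0,ξ₀]` satisfies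
`C(p,ξ) ≥ min(p·C₀(0)/2, C₀(ξ₀)/(2 log 2))`; in particular, if the infimum of `C(p,·)`
over `[0,ξ₀]` is below `p·C₀(0)/2`, then it is at least `C₀(ξ₀)/(2 log 2)`. -/
theorem stmt12 (f C0 : ℝ → ℝ)
    (hf1 : ∀ ξ : ℝ, 0 ≤ ξ → 1 ≤ f ξ) (hC01 : ∀ ξ : ℝ, 0 ≤ ξ → 1 ≤ C0 ξ)
    (hC0mono : MonotoneOn C0 (Set.Ici 0))
    (hfconc : ConcaveOn ℝ (Set.Ici 0) f)
    (hlogC0conc : ConcaveOn ℝ (Set.Ici 0) (fun ξ => Real.log (C0 ξ)))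
    (p : ℝ) (hp : 1 < p)
    (Cp : ℝ → ℝ)
    (hCp : ∀ ξ : ℝ, Cp ξ = C0 ξ /
      (2 * ((1 - (1 - p ^ (-f ξ)) ^ Real.exp ξ) * (1 - p ^ (-f ξ)) ^ Real.exp ξ)))
    (ξ0 : ℝ) (hξ0pos : 0 < ξ0)
    (hξ0 : Real.exp ξ0 = -Real.log 2 / Real.log (1 - p ^ (-f ξ0))) :
    (∀ ξ ∈ Set.Icc 0 ξ0,
      min (p * C0 0 / 2) (C0 ξ0 / (2 * Real.log 2)) ≤ Cp ξ) ∧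
    (sInf (Cp '' Set.Icc 0 ξ0) < p * C0 0 / 2 →
      C0 ξ0 / (2 * Real.log 2) ≤ sInf (Cp '' Set.Icc 0 ξ0)) := by
  set L : ℝ → ℝ := fun ξ => Real.log (C0 ξ) - ξ + f ξ * Real.log p with hL
  have hlogp : 0 < Real.log p := Real.log_pos hp
  have hLconc : ConcaveOn ℝ (Set.Ici 0) L := by
    have h1 := (hlogC0conc.sub (convexOn_id (convex_Ici (0 : ℝ)))).add (hfconc.smul hlogp.le)
    refine h1.congr fun x _ => ?_
    simp [hL, mul_comm]
  have hlow : ∀ ξ, 0 ≤ ξ → Real.exp (L ξ) / 2 ≤ Cp ξ := fun ξ hξ => by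
    rw [hCp]
    exact half_exp_le_cost hp (hC01 ξ hξ) hξ (hf1 ξ hξ)
  have hleft : p * C0 0 / 2 ≤ Real.exp (L 0) / 2 := by
    have hc := hC01 0 le_rfl
    have hpf : p ≤ p ^ f 0 := by
      simpa using Real.rpow_le_rpow_of_exponent_le hp.le (hf1 0 le_rfl)
    have h : Real.exp (L 0) = C0 0 * p ^ f 0 := by
      simp only [hL]
      rw [exp_log_sub_add hp hc, Real.rpow_neg (by linarith)]
      simp
    rw [h]
    nlinarith
  have hright : C0 ξ0 / (2 * Real.log 2) ≤ Real.exp (L ξ0) / 2 := by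
    have hc := hC01 ξ0 hξ0pos.le
    simp only [hL]
    rw [exp_log_sub_add hp hc, div_div, hξ0]
    obtain ⟨hq0, hq1⟩ := rpow_neg_mem_Ioo hp (hf1 ξ0 hξ0pos.le)
    generalize p ^ (-f ξ0) = q at hq0 hq1 ⊢
    have hlog2 : 0 < Real.log 2 := Real.log_pos (by norm_num)
    have hlq : Real.log (1 - q) ≤ -q := by
      linarith [Real.log_le_sub_one_of_pos (sub_pos.2 hq1)]
    have hneg : 0 < -Real.log (1 - q) := by linarith
    rw [← neg_div_neg_eq (-Real.log 2), neg_neg]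
    have hle : Real.log 2 / -Real.log (1 - q) * q ≤ Real.log 2 := by
      rw [div_mul_eq_mul_div, div_le_iff₀ hneg]
      nlinarith
    apply div_le_div_of_nonneg_left (by linarith)
    · positivity
    · linarith
  have hmain : ∀ ξ ∈ Set.Icc 0 ξ0,
      min (p * C0 0 / 2) (C0 ξ0 / (2 * Real.log 2)) ≤ Cp ξ := by
    intro ξ hξ
    have hm : min (L 0) (L ξ0) ≤ L ξ :=
      hLconc.min_le_of_mem_Icc Set.self_mem_Ici hξ0pos.le hξ
    have hC := hlow ξ hξ.1
    rcases min_le_iff.1 hm with h | h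
    · refine (min_le_left _ _).trans ?_
      linarith [Real.exp_le_exp.2 h]
    · refine (min_le_right _ _).trans ?_
      linarith [Real.exp_le_exp.2 h]
  refine ⟨hmain, fun hlt => ?_⟩
  have hinf : min (p * C0 0 / 2) (C0 ξ0 / (2 * Real.log 2)) ≤ sInf (Cp '' Set.Icc 0 ξ0) := by
    apply le_csInf ((Set.nonempty_Icc.2 hξ0pos.le).image Cp)
    rintro _ ⟨ξ, hξ, rfl⟩
    exact hmain ξ hξ
  exact (min_le_iff.1 hinf).resolve_left hlt.not_ge
end

section
/- Let f, C_0 : ℝ → ℝ with f(ξ) ≥ 1 and C_0(ξ) ≥ 1 for all ξ ≥ 0, and suppose lim_{ξ→∞} f(ξ)·log C_0(ξ) / ξ = 0. For each real p > 1, let ξ_0(p) > 0 satisfy e^{ξ_0(p)} = −log 2 / log(1 − p^{−f(ξ_0(p))}), and assume ξ_0(p) → ∞ as p → ∞. Then lim_{p→∞} log( 2·C_0(ξ_0(p)) ) / log p = 0. -/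
/-!
Writing `x = p ^ (-f ξ₀) ∈ (0, 1)`, the inequality `-log (1 - x) ≥ x` turns the defining
equation of `ξ₀` into `exp ξ₀ ≤ log 2 / x ≤ p ^ f ξ₀`, that is `ξ₀ ≤ f ξ₀ * log p`
(`le_mul_log_of_exp_eq`). Hence `0 ≤ log (C₀ ξ₀) / log p ≤ f ξ₀ * log (C₀ ξ₀) / ξ₀`, which tends
to `0` by hypothesis since `ξ₀ p → ∞`, and the remaining term `log 2 / log p` vanishes as well.
-/

open Filter

/-- A solution `ξ` of the optimality equation with exponent `a = f ξ` satisfies `ξ ≤ a * log p`;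
the negative summand `log (log 2)` of the sharper bound is dropped. -/
lemma le_mul_log_of_exp_eq {p a ξ : ℝ} (hp : 1 < p) (ha : 0 < a)
    (h : Real.exp ξ = -Real.log 2 / Real.log (1 - p ^ (-a))) : ξ ≤ a * Real.log p := by
  have hp0 : 0 < p := by linarith
  have hx0 : 0 < p ^ (-a) := Real.rpow_pos_of_pos hp0 _
  have hx1 : p ^ (-a) < 1 := Real.rpow_lt_one_of_one_lt_of_neg hp (by linarith)
  have hlog : p ^ (-a) ≤ -Real.log (1 - p ^ (-a)) := by
    have := Real.log_le_sub_one_of_pos (sub_pos.2 hx1)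
    linarith
  have hlog2 : Real.log 2 ≤ 1 := by
    have := Real.log_le_sub_one_of_pos (zero_lt_two' ℝ)
    linarith
  rw [← Real.exp_le_exp]
  calc Real.exp ξ = Real.log 2 / -Real.log (1 - p ^ (-a)) := by rw [h, neg_div, div_neg]
    _ ≤ 1 / p ^ (-a) := div_le_div₀ zero_le_one hlog2 hx0 hlog
    _ = Real.exp (a * Real.log p) := by
      rw [Real.rpow_neg hp0.le, one_div, inv_inv, Real.rpow_def_of_pos hp0, mul_comm]

/-- Lemma 2, the 'litmus test', of the paper.  With `f, C₀ ≥ 1` on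
`[0,∞)` and `f(ξ)·log C₀(ξ)/ξ → 0` as `ξ → ∞`, if for each `p > 1` the optimum
`ξ₀(p) > 0` satisfies `e^{ξ₀(p)} = -log 2 / log(1 - p^{-f(ξ₀(p))})` and `ξ₀(p) → ∞` as
`p → ∞`, then `log(2·C₀(ξ₀(p)))/log p → 0` as `p → ∞`: the factoring cost is
subexponential in `log p`. -/
theorem stmt13 (f C0 : ℝ → ℝ)
    (hf1 : ∀ ξ : ℝ, 0 ≤ ξ → 1 ≤ f ξ) (hC01 : ∀ ξ : ℝ, 0 ≤ ξ → 1 ≤ C0 ξ)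
    (hlim : Tendsto (fun ξ : ℝ => f ξ * Real.log (C0 ξ) / ξ) atTop (nhds 0))
    (ξ0 : ℝ → ℝ)
    (hξ0pos : ∀ p : ℝ, 1 < p → 0 < ξ0 p)
    (hξ0eq : ∀ p : ℝ, 1 < p →
      Real.exp (ξ0 p) = -Real.log 2 / Real.log (1 - p ^ (-f (ξ0 p))))
    (hξ0top : Tendsto ξ0 atTop atTop) :
    Tendsto (fun p : ℝ => Real.log (2 * C0 (ξ0 p)) / Real.log p) atTop (nhds 0) := by
  have hbound : Tendsto (fun p : ℝ => Real.log 2 / Real.log p +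
      f (ξ0 p) * Real.log (C0 (ξ0 p)) / ξ0 p) atTop (nhds 0) := by
    simpa using (Real.tendsto_log_atTop.const_div_atTop (Real.log 2)).add (hlim.comp hξ0top)
  refine squeeze_zero' ?_ ?_ hbound
  · filter_upwards [eventually_gt_atTop 1] with p hp
    have hC := hC01 _ (hξ0pos p hp).le
    exact div_nonneg (Real.log_nonneg (by linarith)) (Real.log_pos hp).le
  · filter_upwards [eventually_gt_atTop 1] with p hp
    have hξ := hξ0pos p hp
    have hf := hf1 _ hξ.le
    have hC := hC01 _ hξ.le
    have hle := le_mul_log_of_exp_eq hp (by linarith) (hξ0eq p hp)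
    rw [Real.log_mul two_ne_zero (by linarith), add_div]
    refine add_le_add le_rfl ?_
    rw [div_le_div_iff₀ (Real.log_pos hp) hξ]
    calc Real.log (C0 (ξ0 p)) * ξ0 p
        ≤ Real.log (C0 (ξ0 p)) * (f (ξ0 p) * Real.log p) :=
          mul_le_mul_of_nonneg_left hle (Real.log_nonneg hC)
      _ = f (ξ0 p) * Real.log (C0 (ξ0 p)) * Real.log p := by ring
end
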